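/- There exist constants c, C > 0 such that for every function f holomorphic on the open square D = {z ∈ ℂ : 0 < Re z < 1 and |Im z| < min(Re z, 1 − Re z)} with ∫_D |f(z)|² dA(z) < ∞, one has c ∫_D |f(z)|² dA(z) ≤ S(f) ≤ C ∫_D |f(z)|² dA(z), where S(f) = ∑_{n=0}^∞ (2^n/(2n+1)!) ∫_0^{1/2} x^{2n+1} ( |f^{(n)}(x)|² + |f^{(n)}(1−x)|² + |f^{(n)}(1/2 + i(1/2 − x))|² + |f^{(n)}(1/2 + i(x − 1/2))|² ) dx and f^{(n)} denotes the n-th complex derivative of f. -/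

import Mathlib

open MeasureTheory Set
open scoped ENNReal NNReal

/-- The open square `D` with vertices `0`, `1/2 + i/2`, `1`, `1/2 - i/2`. -/
def SquareD : Set ℂ := {z : ℂ | 0 < z.re ∧ z.re < 1 ∧ |z.im| < min z.re (1 - z.re)}

/-- The two-diagonal (AHS)-type sum of a function `f` holomorphic on `D`. -/
noncomputable def diagSum (f : ℂ → ℂ) : ℝ≥0∞ :=
  ∑' n : ℕ, ENNReal.ofReal ((2 : ℝ) ^ n / (Nat.factorial (2 * n + 1) : ℝ)) *
    ∫⁻ x in Ioo (0 : ℝ) (1 / 2),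
      ENNReal.ofReal (x ^ (2 * n + 1)) *
        ((‖iteratedDeriv n f (x : ℂ)‖₊ : ℝ≥0∞) ^ 2 +
          (‖iteratedDeriv n f (1 - (x : ℂ))‖₊ : ℝ≥0∞) ^ 2 +
          (‖iteratedDeriv n f (1 / 2 + Complex.I * (1 / 2 - (x : ℂ)))‖₊ : ℝ≥0∞) ^ 2 +
          (‖iteratedDeriv n f (1 / 2 + Complex.I * ((x : ℂ) - 1 / 2))‖₊ : ℝ≥0∞) ^ 2) ∂volume

/-!
Fix a point `p` on one of the four half-diagonals, at distance `x` from its end at a vertex of `D`.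
Parseval on the circles around `p` and `∫₀^{π/2} sin^{2n+1} = 4^n n!² / (2n+1)!` give
`∑ₙ 2^n x^{2n+1} / (2n+1)! |f⁽ⁿ⁾(p)|² = ∫ |f(w)|² / (π √(x² - 2|w - p|²)) dA(w)` over the disk of
radius `x / √2` around `p`, the largest such disk inside `D`. Integrating over `x`, Tonelli yields
`S(f) = ∫_D |f|² W`, where `W(w)` is a sum of four integrals over `x`, one per half-diagonal. On the
half-diagonal `(0, 1/2)`, with `w = u + iv`, the identity
`x² - 2|w - x|² = 2(u² - v²) - (x - 2u)²` shows that the integral is a mass of an arcsine law, hence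
at most `1`; and if `|v| < u ≤ 1/2` and `|v| ≤ 1/4` it is at least `1/6`. Quarter turns about the
centre of `D` bring every point into this position, so `1/6 ≤ W ≤ 4`.
-/

open scoped Nat Real

theorem hasSum_norm_sq_circleAverage {a : ℕ → ℂ} (ha : Summable fun n ↦ ‖a n‖) :
    HasSum (fun n ↦ ‖a n‖ ^ 2) (Real.circleAverage (fun z ↦ ‖∑' n, a n * z ^ n‖ ^ 2) 0 1) := by
  have parseval (N : ℕ) : ∑ n ∈ Finset.range N, ‖a n‖ ^ 2 =
      Real.circleAverage (fun z ↦ ‖∑ n ∈ Finset.range N, a n * z ^ n‖ ^ 2) 0 1 := by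
    let p : Polynomial ℂ := ∑ n ∈ Finset.range N, Polynomial.monomial n (a n)
    have coeff_p (n : ℕ) : p.coeff n = if n < N then a n else 0 := by
      simp [p, Polynomial.finsetSum_coeff, Polynomial.coeff_monomial]
    have supp_p : p.support ⊆ Finset.range N := fun n hn ↦ by
      simp_all
    calc ∑ n ∈ Finset.range N, ‖a n‖ ^ 2
      _ = ∑ n ∈ Finset.range N, ‖p.coeff n‖ ^ 2 :=
          Finset.sum_congr rfl fun n hn ↦ by rw [coeff_p, if_pos (Finset.mem_range.1 hn)]
      _ = ∑ n ∈ p.support, ‖p.coeff n‖ ^ 2 :=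
          (Finset.sum_subset supp_p fun n _ hn ↦ by simp [Polynomial.notMem_support_iff.1 hn]).symm
      _ = _ := by
          rw [p.sum_sq_norm_coeff_eq_circleAverage]
          simp [p, Polynomial.eval_finsetSum]
  have norm_term (n : ℕ) (θ : ℝ) : ‖a n * circleMap 0 1 θ ^ n‖ = ‖a n‖ := by simp
  have summable_term (θ : ℝ) : Summable fun n ↦ a n * circleMap 0 1 θ ^ n :=
    .of_norm (by simpa only [norm_term] using ha)
  rw [hasSum_iff_tendsto_nat_of_nonneg fun n ↦ by positivity]
  simp_rw [parseval]
  refine (intervalIntegral.tendsto_integral_filter_of_dominated_convergence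
    (fun _ ↦ (∑' n, ‖a n‖) ^ 2) (.of_forall fun N ↦ ?_) (.of_forall fun N ↦ .of_forall fun θ _ ↦ ?_)
    intervalIntegrable_const (.of_forall fun θ _ ↦ ?_)).const_smul _
  · exact Continuous.aestronglyMeasurable (by fun_prop)
  · rw [Real.norm_of_nonneg (by positivity)]
    refine pow_le_pow_left₀ (norm_nonneg _) ?_ 2
    calc ‖∑ n ∈ Finset.range N, a n * circleMap 0 1 θ ^ n‖
      _ ≤ ∑ n ∈ Finset.range N, ‖a n‖ := norm_sum_le_of_le _ fun n _ ↦ (norm_term n θ).le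
      _ ≤ ∑' n, ‖a n‖ := ha.sum_le_tsum _ fun n _ ↦ norm_nonneg _
  · exact ((summable_term θ).hasSum.tendsto_sum_nat.norm).pow 2

theorem hasSum_iteratedDeriv_circleAverage {f : ℂ → ℂ} {c : ℂ} {R ρ : ℝ}
    (hf : DifferentiableOn ℂ f (Metric.ball c R)) (hρ : |ρ| < R) :
    HasSum (fun n ↦ (ρ ^ n / n !) ^ 2 * ‖iteratedDeriv n f c‖ ^ 2)
      (Real.circleAverage (fun z ↦ ‖f z‖ ^ 2) c ρ) := by
  let a : ℕ → ℂ := fun n ↦ ρ ^ n / n ! * iteratedDeriv n f c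
  have taylor {z : ℂ} (hz : ‖z‖ = 1) : HasSum (fun n ↦ a n * z ^ n) (f (ρ * z + c)) := by
    have term (n : ℕ) : a n * z ^ n =
        (n ! : ℂ)⁻¹ • (ρ * z + c - c) ^ n • iteratedDeriv n f c := by
      simp only [a, smul_eq_mul, add_sub_cancel_right]
      ring
    simpa only [term] using Complex.hasSum_taylorSeries_on_ball hf (by simpa [hz])
  have ha : Summable fun n ↦ ‖a n‖ := by
    simpa using (taylor norm_one).summable.norm
  rw [Real.circleAverage_eq_circleAverage_zero_one]
  convert hasSum_norm_sq_circleAverage ha using 1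
  · funext n
    simp [a, mul_pow, div_pow, pow_right_comm _ n 2]
  · refine Real.circleAverage_congr_sphere fun z hz ↦ ?_
    have hz : ‖z‖ = 1 := by simpa using hz
    simp only [(taylor hz).tsum_eq]

theorem lintegral_enorm_sq_circleMap {f : ℂ → ℂ} {c : ℂ} {R ρ : ℝ}
    (hf : DifferentiableOn ℂ f (Metric.ball c R)) (hρ : |ρ| < R) :
    ∫⁻ θ in Ioo (-π) π, ‖f (circleMap c ρ θ)‖ₑ ^ 2 =
      ∑' n, ENNReal.ofReal (2 * π * (ρ ^ n / n !) ^ 2) * ‖iteratedDeriv n f c‖ₑ ^ 2 := by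
  have ofReal_norm_sq (z : ℂ) : ‖z‖ₑ ^ 2 = ENNReal.ofReal (‖z‖ ^ 2) := by
    rw [ENNReal.ofReal_pow (norm_nonneg _), ofReal_norm]
  have parseval := (hasSum_iteratedDeriv_circleAverage hf hρ).mul_left (2 * π)
  have mem_ball (θ : ℝ) : circleMap c ρ θ ∈ Metric.ball c R :=
    Metric.closedBall_subset_ball hρ (by simp [circleMap])
  have cont : Continuous fun θ ↦ ‖f (circleMap c ρ θ)‖ ^ 2 :=
    (hf.continuousOn.comp_continuous (continuous_circleMap c ρ) mem_ball).norm.pow 2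
  calc ∫⁻ θ in Ioo (-π) π, ‖f (circleMap c ρ θ)‖ₑ ^ 2
    _ = ENNReal.ofReal (∫ θ in -π..π, ‖f (circleMap c ρ θ)‖ ^ 2) := by
        simp_rw [ofReal_norm_sq]
        rw [setLIntegral_congr Ioo_ae_eq_Ioc, ← ofReal_integral_eq_lintegral_ofReal
          cont.integrableOn_Ioc (.of_forall fun _ ↦ by positivity),
          intervalIntegral.integral_of_le (by linarith [Real.pi_pos])]
    _ = ENNReal.ofReal (2 * π * Real.circleAverage (fun z ↦ ‖f z‖ ^ 2) c ρ) := by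
        rw [Real.circleAverage_eq_integral_add (-π), intervalIntegral.integral_comp_add_right
          (fun θ ↦ ‖f (circleMap c ρ θ)‖ ^ 2), smul_eq_mul, mul_inv_cancel_left₀ (by positivity)]
        ring_nf
    _ = ∑' n, ENNReal.ofReal (2 * π * (ρ ^ n / n !) ^ 2) * ‖iteratedDeriv n f c‖ₑ ^ 2 := by
        rw [← parseval.tsum_eq, ENNReal.ofReal_tsum_of_nonneg (fun n ↦ by positivity)
          parseval.summable]
        refine tsum_congr fun n ↦ ?_
        rw [ofReal_norm_sq, ← ENNReal.ofReal_mul (by positivity)]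
        ring_nf

theorem lintegral_eq_lintegral_circleMap {g : ℂ → ℝ≥0∞} (hg : Measurable g) (c : ℂ) :
    ∫⁻ z, g z =
      ∫⁻ ρ in Ioi (0 : ℝ), ENNReal.ofReal ρ * ∫⁻ θ in Ioo (-π) π, g (circleMap c ρ θ) := by
  have polar (q : ℝ × ℝ) : Complex.polarCoord.symm q + c = circleMap c q.1 q.2 := by
    simp [circleMap, Complex.exp_mul_I, add_comm]
  rw [← lintegral_add_right_eq_self g c, ← Complex.lintegral_comp_polarCoord_symm]
  simp_rw [polar, smul_eq_mul]
  rw [polarCoord_target, Measure.volume_eq_prod, ← Measure.prod_restrict,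
    lintegral_prod _ (by fun_prop)]
  refine lintegral_congr fun ρ ↦ ?_
  exact lintegral_const_mul (ENNReal.ofReal ρ) (hg.comp (measurable_circleMap c ρ))

theorem setLIntegral_ball_eq_lintegral_circleMap {g : ℂ → ℝ≥0∞} (hg : Measurable g)
    (c : ℂ) (R : ℝ) :
    ∫⁻ z in Metric.ball c R, g z =
      ∫⁻ ρ in Ioo 0 R, ENNReal.ofReal ρ * ∫⁻ θ in Ioo (-π) π, g (circleMap c ρ θ) := by
  rw [← lintegral_indicator measurableSet_ball,
    lintegral_eq_lintegral_circleMap (hg.indicator measurableSet_ball) c,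
    show Ioo 0 R = Iio R ∩ Ioi 0 from Iio_inter_Ioi.symm,
    ← setLIntegral_indicator measurableSet_Iio]
  refine setLIntegral_congr_fun measurableSet_Ioi fun ρ hρ ↦ ?_
  have mem_ball (θ : ℝ) : circleMap c ρ θ ∈ Metric.ball c R ↔ ρ ∈ Iio R := by
    simp [circleMap, abs_of_pos (mem_Ioi.1 hρ)]
  by_cases h : ρ ∈ Iio R <;> simp [indicator, mem_ball, h]

theorem setLIntegral_ball_radial_mul_enorm_sq {f : ℂ → ℂ} {c : ℂ} {R : ℝ}
    (hf : DifferentiableOn ℂ f (Metric.ball c R)) {w : ℝ → ℝ≥0∞} (hw : Measurable w) :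
    ∫⁻ z in Metric.ball c R, w ‖z - c‖ * ‖f z‖ₑ ^ 2 =
      ∑' n, (∫⁻ ρ in Ioo 0 R, w ρ * ENNReal.ofReal (2 * π * ρ ^ (2 * n + 1) / n ! ^ 2)) *
        ‖iteratedDeriv n f c‖ₑ ^ 2 := by
  let F : ℂ → ℂ := (Metric.ball c R).indicator f
  have F_eq {z : ℂ} (hz : z ∈ Metric.ball c R) : F z = f z := indicator_of_mem hz f
  have measurable_F : Measurable F := by
    classical
    simpa only [F, ← piecewise_eq_indicator] using
      hf.continuousOn.measurable_piecewise continuous_zero.continuousOn measurableSet_ball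
  have norm_circleMap_sub {ρ : ℝ} (hρ : 0 < ρ) (θ : ℝ) : ‖circleMap c ρ θ - c‖ = ρ := by
    simp [circleMap, abs_of_pos hρ]
  have integral_circleMap {ρ : ℝ} (hρ : ρ ∈ Ioo 0 R) :
      ENNReal.ofReal ρ * ∫⁻ θ in Ioo (-π) π,
          w ‖circleMap c ρ θ - c‖ * ‖F (circleMap c ρ θ)‖ₑ ^ 2 =
        ∑' n, w ρ * ENNReal.ofReal (2 * π * ρ ^ (2 * n + 1) / n ! ^ 2) *
          ‖iteratedDeriv n f c‖ₑ ^ 2 := by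
    have mem_ball (θ : ℝ) : circleMap c ρ θ ∈ Metric.ball c R := by
      simpa [circleMap, abs_of_pos hρ.1] using hρ.2
    simp_rw [norm_circleMap_sub hρ.1, F_eq (mem_ball _)]
    have cont : Continuous fun θ ↦ f (circleMap c ρ θ) :=
      hf.continuousOn.comp_continuous (continuous_circleMap c ρ) mem_ball
    rw [lintegral_const_mul _ (cont.measurable.enorm.pow_const 2),
      lintegral_enorm_sq_circleMap hf (by simpa only [abs_of_pos hρ.1] using hρ.2),
      ← ENNReal.tsum_mul_left, ← ENNReal.tsum_mul_left]
    refine tsum_congr fun n ↦ ?_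
    rw [mul_left_comm, ← mul_assoc (ENNReal.ofReal ρ), ← ENNReal.ofReal_mul hρ.1.le, mul_assoc]
    ring_nf
  calc ∫⁻ z in Metric.ball c R, w ‖z - c‖ * ‖f z‖ₑ ^ 2
    _ = ∫⁻ z in Metric.ball c R, w ‖z - c‖ * ‖F z‖ₑ ^ 2 :=
        setLIntegral_congr_fun measurableSet_ball fun z hz ↦ by rw [F_eq hz]
    _ = ∫⁻ ρ in Ioo 0 R, ∑' n, w ρ * ENNReal.ofReal (2 * π * ρ ^ (2 * n + 1) / n ! ^ 2) *
          ‖iteratedDeriv n f c‖ₑ ^ 2 := by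
        rw [setLIntegral_ball_eq_lintegral_circleMap (by fun_prop)]
        exact setLIntegral_congr_fun measurableSet_Ioo fun ρ hρ ↦ integral_circleMap hρ
    _ = _ := by
        rw [lintegral_tsum fun n ↦ by fun_prop]
        exact tsum_congr fun n ↦ lintegral_mul_const _ (by fun_prop)

theorem integral_sin_pow_odd_zero_pi_div_two (n : ℕ) :
    ∫ θ in (0 : ℝ)..π / 2, Real.sin θ ^ (2 * n + 1) = 4 ^ n * n ! ^ 2 / (2 * n + 1)! := by
  induction n with
  | zero => simp
  | succ n ih =>
    rw [show 2 * (n + 1) + 1 = 2 * n + 1 + 2 by ring, integral_sin_pow, ih]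
    simp only [Real.sin_zero, Real.cos_pi_div_two, Nat.factorial_succ]
    push_cast
    field_simp
    ring

theorem setLIntegral_one_div_sqrt_sq_sub_sq_mul {a : ℝ} (ha : 0 < a) (c : ℝ) {s t : ℝ}
    (hst : s ≤ t) (hs : -(π / 2) ≤ s) (ht : t ≤ π / 2) (g : ℝ → ℝ≥0∞) :
    ∫⁻ x in Ioo (c + a * Real.sin s) (c + a * Real.sin t),
        ENNReal.ofReal (1 / √(a ^ 2 - (x - c) ^ 2)) * g x =
      ∫⁻ θ in Ioo s t, g (c + a * Real.sin θ) := by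
  let u : ℝ → ℝ := fun θ ↦ c + a * Real.sin θ
  have strictMonoOn_u : StrictMonoOn u (Icc s t) := fun x hx y hy hxy ↦ by
    have := Real.strictMonoOn_sin ⟨hs.trans hx.1, hx.2.trans ht⟩ ⟨hs.trans hy.1, hy.2.trans ht⟩ hxy
    simp only [u]
    gcongr
  have deriv_u (θ : ℝ) : HasDerivAt u (a * Real.cos θ) θ :=
    ((Real.hasDerivAt_sin θ).const_mul a).const_add c
  have image_u : u '' Ioo s t = Ioo (u s) (u t) :=
    ContinuousOn.image_Ioo_of_strictMonoOn hst (by fun_prop) strictMonoOn_u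
  have jacobian {θ : ℝ} (hθ : θ ∈ Ioo s t) :
      ENNReal.ofReal (a * Real.cos θ) * ENNReal.ofReal (1 / √(a ^ 2 - (u θ - c) ^ 2)) = 1 := by
    have cos_pos : 0 < Real.cos θ :=
      Real.cos_pos_of_mem_Ioo ⟨hs.trans_lt hθ.1, hθ.2.trans_le ht⟩
    have sqrt_eq : √(a ^ 2 - (u θ - c) ^ 2) = a * Real.cos θ := by
      rw [← Real.sqrt_sq (by positivity : 0 ≤ a * Real.cos θ), mul_pow, Real.cos_sq',
        add_sub_cancel_left]
      ring_nf
    rw [sqrt_eq, ← ENNReal.ofReal_mul (by positivity), mul_one_div_cancel (by positivity),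
      ENNReal.ofReal_one]
  rw [← image_u, lintegral_image_eq_lintegral_deriv_mul_of_monotoneOn measurableSet_Ioo
    (fun θ _ ↦ (deriv_u θ).hasDerivWithinAt) (strictMonoOn_u.monotoneOn.mono Ioo_subset_Icc_self)]
  refine setLIntegral_congr_fun measurableSet_Ioo fun θ hθ ↦ ?_
  rw [← mul_assoc, jacobian hθ, one_mul]

theorem setLIntegral_one_div_sqrt_sq_sub_sq_mul_pow {a : ℝ} (ha : 0 < a) (n : ℕ) :
    ∫⁻ r in Ioo 0 a, ENNReal.ofReal (1 / √(a ^ 2 - r ^ 2)) * ENNReal.ofReal (r ^ (2 * n + 1)) =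
      ENNReal.ofReal (a ^ (2 * n + 1) * (4 ^ n * n ! ^ 2 / (2 * n + 1)!)) := by
  have sin_nonneg {θ : ℝ} (hθ : θ ∈ Ioc 0 (π / 2)) : 0 ≤ Real.sin θ :=
    Real.sin_nonneg_of_nonneg_of_le_pi hθ.1.le (by linarith [hθ.2, Real.pi_pos])
  have substitution := setLIntegral_one_div_sqrt_sq_sub_sq_mul ha 0 (s := 0) (t := π / 2)
    (by positivity) (by linarith [Real.pi_pos]) le_rfl fun r ↦ ENNReal.ofReal (r ^ (2 * n + 1))
  simp only [Real.sin_zero, Real.sin_pi_div_two, mul_zero, mul_one, zero_add, sub_zero]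
    at substitution
  rw [substitution, setLIntegral_congr Ioo_ae_eq_Ioc, ← ofReal_integral_eq_lintegral_ofReal,
    ← intervalIntegral.integral_of_le (by positivity)]
  · simp_rw [mul_pow, intervalIntegral.integral_const_mul, integral_sin_pow_odd_zero_pi_div_two]
  · exact Continuous.integrableOn_Ioc (by fun_prop)
  · refine ae_restrict_of_forall_mem measurableSet_Ioc fun θ hθ ↦ ?_
    exact pow_nonneg (mul_nonneg ha.le (sin_nonneg hθ)) _

/-- The density, at distance `r` from the centre, of the radial measure on the disk of radius
`x / √2` that turns the integral of `|f| ^ 2` into the sum of the terms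
`2 ^ n / (2 n + 1)! * x ^ (2 n + 1) * |f⁽ⁿ⁾| ^ 2` at the centre. It is `0` off that disk, because
`√` vanishes on negative reals and `1 / 0 = 0`. -/
noncomputable def diskDensity (x r : ℝ) : ℝ≥0∞ :=
  ENNReal.ofReal (1 / (π * √(x ^ 2 - 2 * r ^ 2)))

@[fun_prop]
theorem measurable_diskDensity {α : Type*} [MeasurableSpace α] {g h : α → ℝ} (hg : Measurable g)
    (hh : Measurable h) : Measurable fun a ↦ diskDensity (g a) (h a) := by
  unfold diskDensity
  fun_prop

theorem diskDensity_eq_zero {x r : ℝ} (h : x ^ 2 ≤ 2 * r ^ 2) : diskDensity x r = 0 := by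
  simp [diskDensity, Real.sqrt_eq_zero_of_nonpos (sub_nonpos.2 h)]

theorem diskDensity_sqrt_two_mul (a r : ℝ) :
    diskDensity (√2 * a) r =
      ENNReal.ofReal (1 / (√2 * π)) * ENNReal.ofReal (1 / √(a ^ 2 - r ^ 2)) := by
  rw [diskDensity, mul_pow, Real.sq_sqrt zero_le_two, ← mul_sub, Real.sqrt_mul zero_le_two,
    ← ENNReal.ofReal_mul (by positivity)]
  congr 1
  ring

theorem setLIntegral_diskDensity_mul_pow {x : ℝ} (hx : 0 < x) (n : ℕ) :
    ∫⁻ r in Ioo 0 (x / √2), diskDensity x r * ENNReal.ofReal (2 * π * r ^ (2 * n + 1) / n ! ^ 2) =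
      ENNReal.ofReal (2 ^ n * x ^ (2 * n + 1) / (2 * n + 1)!) := by
  obtain ⟨a, ha, rfl⟩ : ∃ a, 0 < a ∧ x = √2 * a := ⟨x / √2, by positivity, by field_simp⟩
  have integrand (r : ℝ) :
      diskDensity (√2 * a) r * ENNReal.ofReal (2 * π * r ^ (2 * n + 1) / n ! ^ 2) =
        ENNReal.ofReal (√2 / n ! ^ 2) *
          (ENNReal.ofReal (1 / √(a ^ 2 - r ^ 2)) * ENNReal.ofReal (r ^ (2 * n + 1))) := by
    have constant : √2 / n ! ^ 2 = 1 / (√2 * π) * (2 * π / n ! ^ 2) := by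
      field_simp
      exact Real.sq_sqrt zero_le_two
    rw [diskDensity_sqrt_two_mul, constant, ENNReal.ofReal_mul (by positivity),
      mul_div_right_comm, ENNReal.ofReal_mul (by positivity)]
    ring
  have sqrt_two_pow : √2 ^ (2 * n + 1) = 2 ^ n * √2 := by
    rw [pow_succ, pow_mul, Real.sq_sqrt zero_le_two]
  have four_pow : (4 : ℝ) ^ n = 2 ^ n * 2 ^ n := by rw [← mul_pow]; norm_num
  rw [mul_div_cancel_left₀ a (by positivity), lintegral_congr integrand,
    lintegral_const_mul _ (by fun_prop), setLIntegral_one_div_sqrt_sq_sub_sq_mul_pow ha,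
    ← ENNReal.ofReal_mul (by positivity), mul_pow, sqrt_two_pow, four_pow]
  congr 1
  field_simp

theorem tsum_iteratedDeriv_eq_setLIntegral_diskDensity {f : ℂ → ℂ} {p : ℂ} {x : ℝ} {s : Set ℂ}
    (hx : 0 < x) (hps : Metric.ball p (x / √2) ⊆ s) (hf : DifferentiableOn ℂ f s) :
    ∑' n, ENNReal.ofReal (2 ^ n / (2 * n + 1)!) *
        (ENNReal.ofReal (x ^ (2 * n + 1)) * ‖iteratedDeriv n f p‖ₑ ^ 2) =
      ∫⁻ z in s, diskDensity x ‖z - p‖ * ‖f z‖ₑ ^ 2 := by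
  have density_eq_zero {z : ℂ} (hz : z ∉ Metric.ball p (x / √2)) : diskDensity x ‖z - p‖ = 0 := by
    rw [mem_ball_iff_norm, not_lt, div_le_iff₀ (by positivity)] at hz
    refine diskDensity_eq_zero ?_
    calc x ^ 2
      _ ≤ (‖z - p‖ * √2) ^ 2 := by gcongr
      _ = 2 * ‖z - p‖ ^ 2 := by rw [mul_pow, Real.sq_sqrt zero_le_two, mul_comm]
  have restrict_ball : (Metric.ball p (x / √2)).indicator
      (fun z ↦ diskDensity x ‖z - p‖ * ‖f z‖ₑ ^ 2) = fun z ↦ diskDensity x ‖z - p‖ * ‖f z‖ₑ ^ 2 :=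
    indicator_eq_self.2 fun z hz ↦ by_contra fun hz' ↦ hz (by simp [density_eq_zero hz'])
  rw [← restrict_ball, setLIntegral_indicator measurableSet_ball, inter_eq_left.2 hps,
    setLIntegral_ball_radial_mul_enorm_sq (w := diskDensity x) (hf.mono hps) (by fun_prop)]
  refine tsum_congr fun n ↦ ?_
  rw [setLIntegral_diskDensity_mul_pow hx, ← mul_assoc, ← ENNReal.ofReal_mul (by positivity),
    mul_div_right_comm]

theorem isOpen_SquareD : IsOpen SquareD := by
  have : SquareD = {z : ℂ | 0 < z.re} ∩ ({z : ℂ | z.re < 1} ∩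
      {z : ℂ | |z.im| < min z.re (1 - z.re)}) := rfl
  rw [this]
  exact (isOpen_lt (by fun_prop) (by fun_prop)).inter
    ((isOpen_lt (by fun_prop) (by fun_prop)).inter (isOpen_lt (by fun_prop) (by fun_prop)))

theorem mem_SquareD_iff {z : ℂ} : z ∈ SquareD ↔ |(z - 1 / 2).re| + |(z - 1 / 2).im| < 1 / 2 := by
  have re_sub : (z - 1 / 2).re = z.re - 1 / 2 := by simp
  have im_sub : (z - 1 / 2).im = z.im := by simp
  rw [re_sub, im_sub]
  simp only [SquareD, mem_ofPred_eq, lt_min_iff]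
  constructor
  · rintro ⟨-, -, him, him'⟩
    rcases abs_cases (z.re - 1 / 2) with ⟨h, _⟩ | ⟨h, _⟩ <;> linarith
  · intro h
    have := abs_nonneg z.im
    have := neg_abs_le (z.re - 1 / 2)
    have := le_abs_self (z.re - 1 / 2)
    refine ⟨?_, ?_, ?_, ?_⟩ <;> linarith

theorem abs_re_add_abs_im_le_sqrt_two_mul_norm (z : ℂ) : |z.re| + |z.im| ≤ √2 * ‖z‖ := by
  refine abs_le_of_sq_le_sq' ?_ (by positivity) |>.2
  rw [mul_pow, Real.sq_sqrt zero_le_two, Complex.sq_norm, Complex.normSq_apply]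
  nlinarith [sq_nonneg (|z.re| - |z.im|), sq_abs z.re, sq_abs z.im]

theorem abs_re_add_abs_im_I_pow_mul (k : ℕ) (z : ℂ) :
    |(Complex.I ^ k * z).re| + |(Complex.I ^ k * z).im| = |z.re| + |z.im| := by
  induction k with
  | zero => simp
  | succ k ih =>
    rw [pow_succ', mul_assoc, Complex.I_mul_re, Complex.I_mul_im, abs_neg, add_comm, ih]

/-- The rotation by `k` quarter turns about the centre `1 / 2` of `SquareD`. It maps `(0, 1 / 2)`
onto the `k`-th of the four halves of the diagonals. -/
noncomputable def quarterTurn (k : ℕ) (z : ℂ) : ℂ := 1 / 2 + Complex.I ^ k * (z - 1 / 2)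

theorem continuous_quarterTurn (k : ℕ) : Continuous (quarterTurn k) := by
  unfold quarterTurn
  fun_prop

theorem norm_quarterTurn_sub_quarterTurn (k : ℕ) (z w : ℂ) :
    ‖quarterTurn k z - quarterTurn k w‖ = ‖z - w‖ := by
  have : quarterTurn k z - quarterTurn k w = Complex.I ^ k * (z - w) := by
    simp only [quarterTurn]
    ring
  simp [this]

theorem abs_re_add_abs_im_quarterTurn_sub (k : ℕ) (z : ℂ) :
    |(quarterTurn k z - 1 / 2).re| + |(quarterTurn k z - 1 / 2).im| =
      |(z - 1 / 2).re| + |(z - 1 / 2).im| := by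
  rw [quarterTurn, add_sub_cancel_left, abs_re_add_abs_im_I_pow_mul]

theorem ball_quarterTurn_subset_SquareD (k : ℕ) {x : ℝ} (hx : x ≤ 1 / 2) :
    Metric.ball (quarterTurn k x) (x / √2) ⊆ SquareD := fun w hw ↦ by
  set p := quarterTurn k x
  have norm_lt : √2 * ‖w - p‖ < x := by
    rwa [mem_ball_iff_norm, lt_div_iff₀' (by positivity)] at hw
  have center : |(p - 1 / 2).re| + |(p - 1 / 2).im| = 1 / 2 - x := by
    rw [abs_re_add_abs_im_quarterTurn_sub]
    have re_eq : ((x : ℂ) - 1 / 2).re = x - 1 / 2 := by simp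
    have im_eq : ((x : ℂ) - 1 / 2).im = 0 := by simp
    rw [re_eq, im_eq, abs_zero, add_zero, abs_of_nonpos (by linarith)]
    ring
  rw [mem_SquareD_iff, ← sub_add_sub_cancel w p, Complex.add_re, Complex.add_im]
  linarith [abs_add_le (w - p).re (p - 1 / 2).re, abs_add_le (w - p).im (p - 1 / 2).im,
    abs_re_add_abs_im_le_sqrt_two_mul_norm (w - p)]

theorem exists_quarterTurn_eq {w : ℂ} (hw : w ∈ SquareD) :
    ∃ k ∈ Finset.range 4, ∃ z : ℂ, |z.im| < z.re ∧ z.re ≤ 1 / 2 ∧ |z.im| ≤ 1 / 4 ∧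
      quarterTurn k z = w := by
  obtain ⟨-, -, him⟩ := hw
  obtain ⟨him_lt, him_lt'⟩ := lt_min_iff.1 him
  rcases le_total |w.im| (1 / 4) with him_le | him_ge
  · rcases le_total w.re (1 / 2) with hre | hre
    · exact ⟨0, by simp, w, him_lt, hre, him_le, by simp [quarterTurn]⟩
    · refine ⟨2, by simp, 1 - w, by simpa, ?_, by simpa using him_le, ?_⟩
      · simp only [Complex.sub_re, Complex.one_re]
        linarith
      · simp only [quarterTurn, Complex.I_sq]
        ring
  · have hre : |w.re - 1 / 2| < 1 / 2 - |w.im| := abs_lt.2 ⟨by linarith, by linarith⟩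
    rcases abs_cases w.im with ⟨habs, -⟩ | ⟨habs, -⟩
    · refine ⟨3, by simp, ⟨1 / 2 - w.im, w.re - 1 / 2⟩, ?_, ?_, ?_, ?_⟩
      · linarith
      · dsimp only; linarith [abs_nonneg w.im]
      · linarith
      · apply Complex.ext <;> simp [quarterTurn, pow_succ]
    · refine ⟨1, by simp, ⟨1 / 2 + w.im, 1 / 2 - w.re⟩, ?_, ?_, ?_, ?_⟩
      · dsimp only; rw [abs_sub_comm]; linarith
      · dsimp only; linarith [abs_nonneg w.im]
      · dsimp only; rw [abs_sub_comm]; linarith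
      · apply Complex.ext <;> simp [quarterTurn, pow_succ]

theorem quarterTurn_surjective (k : ℕ) : Function.Surjective (quarterTurn k) := fun w ↦
  ⟨1 / 2 + (Complex.I ^ k)⁻¹ * (w - 1 / 2), by
    rw [quarterTurn, add_sub_cancel_left, mul_inv_cancel_left₀ (pow_ne_zero k Complex.I_ne_zero)]
    ring⟩

theorem diskDensity_norm_sub_ofReal (x : ℝ) (w : ℂ) :
    diskDensity x ‖w - x‖ =
      ENNReal.ofReal (1 / (π * √(2 * (w.re ^ 2 - w.im ^ 2) - (x - 2 * w.re) ^ 2))) := by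
  rw [diskDensity, Complex.sq_norm, Complex.normSq_apply]
  simp only [Complex.sub_re, Complex.sub_im, Complex.ofReal_re, Complex.ofReal_im, sub_zero]
  ring_nf

theorem setLIntegral_diskDensity_norm_sub_ofReal {w : ℂ} {a s t : ℝ} (ha : 0 < a)
    (ha_sq : a ^ 2 = 2 * (w.re ^ 2 - w.im ^ 2)) (hst : s ≤ t) (hs : -(π / 2) ≤ s)
    (ht : t ≤ π / 2) :
    ∫⁻ x in Ioo (2 * w.re + a * Real.sin s) (2 * w.re + a * Real.sin t), diskDensity x ‖w - x‖ =
      ENNReal.ofReal ((t - s) / π) := by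
  have integrand (x : ℝ) : diskDensity x ‖w - x‖ =
      ENNReal.ofReal (1 / √(a ^ 2 - (x - 2 * w.re) ^ 2)) * ENNReal.ofReal (1 / π) := by
    rw [diskDensity_norm_sub_ofReal, ← ha_sq, ← ENNReal.ofReal_mul (by positivity)]
    ring_nf
  simp_rw [integrand]
  rw [setLIntegral_one_div_sqrt_sq_sub_sq_mul ha _ hst hs ht, setLIntegral_const,
    Real.volume_Ioo, ← ENNReal.ofReal_mul (by positivity), one_div_mul_eq_div]

theorem lintegral_diskDensity_norm_sub_ofReal_le_one (w : ℂ) :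
    ∫⁻ x : ℝ, diskDensity x ‖w - x‖ ≤ 1 := by
  have eq_zero {x : ℝ} (hx : 2 * (w.re ^ 2 - w.im ^ 2) ≤ (x - 2 * w.re) ^ 2) :
      diskDensity x ‖w - x‖ = 0 := by
    simp [diskDensity_norm_sub_ofReal, Real.sqrt_eq_zero_of_nonpos (sub_nonpos.2 hx)]
  rcases le_or_gt (2 * (w.re ^ 2 - w.im ^ 2)) 0 with hw | hw
  · simp [eq_zero (hw.trans (sq_nonneg _))]
  obtain ⟨a, ha, ha_sq⟩ : ∃ a : ℝ, 0 < a ∧ a ^ 2 = 2 * (w.re ^ 2 - w.im ^ 2) :=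
    ⟨_, Real.sqrt_pos.2 hw, Real.sq_sqrt hw.le⟩
  have support_subset : (Function.support fun x : ℝ ↦ diskDensity x ‖w - x‖) ⊆
      Ioo (2 * w.re + a * Real.sin (-(π / 2))) (2 * w.re + a * Real.sin (π / 2)) := by
    intro x hx
    rw [Real.sin_neg, Real.sin_pi_div_two]
    obtain ⟨hl, hr⟩ := abs_lt_of_sq_lt_sq' (ha_sq ▸ not_le.1 (mt eq_zero hx)) ha.le
    constructor <;> linarith
  rw [← setLIntegral_eq_of_support_subset support_subset,
    setLIntegral_diskDensity_norm_sub_ofReal ha ha_sq (by linarith [Real.pi_pos]) le_rfl le_rfl]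
  simp

theorem ofReal_one_div_six_le_setLIntegral_diskDensity {w : ℂ} (hw : |w.im| < w.re)
    (hre : w.re ≤ 1 / 2) (him : |w.im| ≤ 1 / 4) :
    ENNReal.ofReal (1 / 6) ≤ ∫⁻ x in Ioo (0 : ℝ) (1 / 2), diskDensity x ‖w - x‖ := by
  have re_pos : 0 < w.re := (abs_nonneg _).trans_lt hw
  have im_sq_lt : w.im ^ 2 < w.re ^ 2 := sq_lt_sq' (neg_lt_of_abs_lt hw) (lt_of_abs_lt hw)
  have im_sq_le : w.im ^ 2 ≤ (1 / 4) ^ 2 := by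
    simpa using pow_le_pow_left₀ (abs_nonneg _) him 2
  obtain ⟨a, ha, ha_sq⟩ : ∃ a : ℝ, 0 < a ∧ a ^ 2 = 2 * (w.re ^ 2 - w.im ^ 2) :=
    have h : 0 < 2 * (w.re ^ 2 - w.im ^ 2) := by linarith
    ⟨_, Real.sqrt_pos.2 h, Real.sq_sqrt h.le⟩
  have left_endpoint : 0 ≤ 2 * w.re - a := by
    nlinarith
  have right_endpoint : 2 * w.re - a * (√3 / 2) ≤ 1 / 2 := by
    rcases le_total w.re (1 / 4) with h | h
    · linarith [show 0 ≤ a * (√3 / 2) by positivity]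
    have sq_le : (2 * w.re - 1 / 2) ^ 2 ≤ (a * (√3 / 2)) ^ 2 := by
      rw [mul_pow, div_pow, Real.sq_sqrt (by norm_num), ha_sq]
      nlinarith
    linarith [(abs_le_of_sq_le_sq' sq_le (by positivity)).2]
  have arc_subset : Ioo (2 * w.re + a * Real.sin (-(π / 2))) (2 * w.re + a * Real.sin (-(π / 3))) ⊆
      Ioo 0 (1 / 2) := by
    rw [Real.sin_neg, Real.sin_neg, Real.sin_pi_div_two, Real.sin_pi_div_three]
    exact Ioo_subset_Ioo (by linarith) (by linarith)
  calc ENNReal.ofReal (1 / 6)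
    _ = ENNReal.ofReal ((-(π / 3) - -(π / 2)) / π) := by
        congr 1
        field_simp
        norm_num
    _ = ∫⁻ x in Ioo (2 * w.re + a * Real.sin (-(π / 2))) (2 * w.re + a * Real.sin (-(π / 3))),
          diskDensity x ‖w - x‖ :=
        (setLIntegral_diskDensity_norm_sub_ofReal ha ha_sq (by linarith [Real.pi_pos]) le_rfl
          (by linarith [Real.pi_pos])).symm
    _ ≤ ∫⁻ x in Ioo (0 : ℝ) (1 / 2), diskDensity x ‖w - x‖ := lintegral_mono_set arc_subset

/-- The weight with which `|f w| ^ 2` enters the part of `diagSum f` coming from the `k`-th half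
of the diagonals. -/
noncomputable def halfDiagWeight (k : ℕ) (w : ℂ) : ℝ≥0∞ :=
  ∫⁻ x in Ioo (0 : ℝ) (1 / 2), diskDensity x ‖w - quarterTurn k x‖

theorem measurable_halfDiagWeight (k : ℕ) : Measurable (halfDiagWeight k) := by
  have cont := continuous_quarterTurn k
  exact Measurable.lintegral_prod_right'
    (f := fun q : ℂ × ℝ ↦ diskDensity q.2 ‖q.1 - quarterTurn k q.2‖) (by fun_prop)

theorem halfDiagWeight_quarterTurn (k : ℕ) (z : ℂ) :
    halfDiagWeight k (quarterTurn k z) = ∫⁻ x in Ioo (0 : ℝ) (1 / 2), diskDensity x ‖z - x‖ := by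
  simp only [halfDiagWeight, norm_quarterTurn_sub_quarterTurn]

theorem halfDiagWeight_le_one (k : ℕ) (w : ℂ) : halfDiagWeight k w ≤ 1 := by
  obtain ⟨z, rfl⟩ := quarterTurn_surjective k w
  rw [halfDiagWeight_quarterTurn]
  exact (setLIntegral_le_lintegral _ _).trans (lintegral_diskDensity_norm_sub_ofReal_le_one z)

theorem sum_halfDiagWeight_le (w : ℂ) :
    ∑ k ∈ Finset.range 4, halfDiagWeight k w ≤ ENNReal.ofReal 4 := by
  refine (Finset.sum_le_card_nsmul _ _ 1 fun k _ ↦ halfDiagWeight_le_one k w).trans_eq ?_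
  simp

theorem le_sum_halfDiagWeight {w : ℂ} (hw : w ∈ SquareD) :
    ENNReal.ofReal (1 / 6) ≤ ∑ k ∈ Finset.range 4, halfDiagWeight k w := by
  obtain ⟨k, hk, z, hz, hre, him, rfl⟩ := exists_quarterTurn_eq hw
  calc ENNReal.ofReal (1 / 6)
    _ ≤ halfDiagWeight k (quarterTurn k z) := by
        rw [halfDiagWeight_quarterTurn]
        exact ofReal_one_div_six_le_setLIntegral_diskDensity hz hre him
    _ ≤ ∑ j ∈ Finset.range 4, halfDiagWeight j (quarterTurn k z) :=
        Finset.single_le_sum_of_canonicallyOrdered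
          (f := fun j ↦ halfDiagWeight j (quarterTurn k z)) hk

theorem continuousOn_iteratedDeriv {E : Type*} [NormedAddCommGroup E] [NormedSpace ℂ E]
    [CompleteSpace E] {f : ℂ → E} {U : Set ℂ} (hU : IsOpen U) (hf : DifferentiableOn ℂ f U)
    (n : ℕ) : ContinuousOn (iteratedDeriv n f) U := by
  rw [iteratedDeriv_eq_iterate]
  exact ((hf.analyticOnNhd hU).iterated_deriv n).continuousOn

theorem aemeasurable_iteratedDeriv_halfDiag {f : ℂ → ℂ} (hf : DifferentiableOn ℂ f SquareD)
    (k n : ℕ) :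
    AEMeasurable (fun x : ℝ ↦
      ENNReal.ofReal (x ^ (2 * n + 1)) * ‖iteratedDeriv n f (quarterTurn k x)‖ₑ ^ 2)
      (volume.restrict (Ioo 0 (1 / 2))) := by
  have cont : ContinuousOn (fun x : ℝ ↦ iteratedDeriv n f (quarterTurn k x)) (Ioo 0 (1 / 2)) :=
    (continuousOn_iteratedDeriv isOpen_SquareD hf n).comp
      ((continuous_quarterTurn k).comp Complex.continuous_ofReal).continuousOn fun x hx ↦
        ball_quarterTurn_subset_SquareD k hx.2.le
          (Metric.mem_ball_self (div_pos hx.1 (by positivity)))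
  have := cont.aemeasurable (μ := volume) measurableSet_Ioo
  fun_prop

theorem tsum_iteratedDeriv_halfDiag_eq {f : ℂ → ℂ} (hf : DifferentiableOn ℂ f SquareD) (k : ℕ) :
    ∑' n, ENNReal.ofReal (2 ^ n / (2 * n + 1)!) * ∫⁻ x in Ioo (0 : ℝ) (1 / 2),
        ENNReal.ofReal (x ^ (2 * n + 1)) * ‖iteratedDeriv n f (quarterTurn k x)‖ₑ ^ 2 =
      ∫⁻ w in SquareD, halfDiagWeight k w * ‖f w‖ₑ ^ 2 := by
  have measurable_f : AEMeasurable f (volume.restrict SquareD) :=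
    hf.continuousOn.aemeasurable isOpen_SquareD.measurableSet
  have measurable_integrand : AEMeasurable (Function.uncurry fun (x : ℝ) (w : ℂ) ↦
      diskDensity x ‖w - quarterTurn k x‖ * ‖f w‖ₑ ^ 2)
      ((volume.restrict (Ioo 0 (1 / 2))).prod (volume.restrict SquareD)) := by
    have cont := continuous_quarterTurn k
    have := measurable_f.comp_snd (μ := volume.restrict (Ioo (0 : ℝ) (1 / 2)))
    simp only [Function.uncurry_def]
    fun_prop
  calc ∑' n, ENNReal.ofReal (2 ^ n / (2 * n + 1)!) * ∫⁻ x in Ioo (0 : ℝ) (1 / 2),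
        ENNReal.ofReal (x ^ (2 * n + 1)) * ‖iteratedDeriv n f (quarterTurn k x)‖ₑ ^ 2
    _ = ∫⁻ x in Ioo (0 : ℝ) (1 / 2), ∑' n, ENNReal.ofReal (2 ^ n / (2 * n + 1)!) *
          (ENNReal.ofReal (x ^ (2 * n + 1)) *
            ‖iteratedDeriv n f (quarterTurn k x)‖ₑ ^ 2) := by
        rw [lintegral_tsum fun n ↦ (aemeasurable_iteratedDeriv_halfDiag hf k n).const_mul _]
        exact tsum_congr fun n ↦ (lintegral_const_mul'' _
          (aemeasurable_iteratedDeriv_halfDiag hf k n)).symm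
    _ = ∫⁻ x in Ioo (0 : ℝ) (1 / 2), ∫⁻ w in SquareD,
          diskDensity x ‖w - quarterTurn k x‖ * ‖f w‖ₑ ^ 2 :=
        setLIntegral_congr_fun measurableSet_Ioo fun x hx ↦
          tsum_iteratedDeriv_eq_setLIntegral_diskDensity hx.1
            (ball_quarterTurn_subset_SquareD k hx.2.le) hf
    _ = ∫⁻ w in SquareD, ∫⁻ x in Ioo (0 : ℝ) (1 / 2),
          diskDensity x ‖w - quarterTurn k x‖ * ‖f w‖ₑ ^ 2 :=
        lintegral_lintegral_swap measurable_integrand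
    _ = ∫⁻ w in SquareD, halfDiagWeight k w * ‖f w‖ₑ ^ 2 := by
        have cont := continuous_quarterTurn k
        exact lintegral_congr fun w ↦ lintegral_mul_const _ (by fun_prop)

theorem diagSum_eq_sum_halfDiag {f : ℂ → ℂ} (hf : DifferentiableOn ℂ f SquareD) :
    diagSum f = ∑ k ∈ Finset.range 4, ∑' n, ENNReal.ofReal (2 ^ n / (2 * n + 1)!) *
      ∫⁻ x in Ioo (0 : ℝ) (1 / 2),
        ENNReal.ofReal (x ^ (2 * n + 1)) * ‖iteratedDeriv n f (quarterTurn k x)‖ₑ ^ 2 := by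
  have quarterTurn_zero (z : ℂ) : quarterTurn 0 z = z := by simp [quarterTurn]
  have quarterTurn_one (z : ℂ) : quarterTurn 1 z = 1 / 2 + Complex.I * (z - 1 / 2) := by
    simp [quarterTurn]
  have quarterTurn_two (z : ℂ) : quarterTurn 2 z = 1 - z := by
    rw [quarterTurn, Complex.I_sq]
    ring
  have quarterTurn_three (z : ℂ) : quarterTurn 3 z = 1 / 2 + Complex.I * (1 / 2 - z) := by
    rw [quarterTurn, Complex.I_pow_three]
    ring
  rw [← Summable.tsum_finsetSum fun _ _ ↦ ENNReal.summable]
  refine tsum_congr fun n ↦ ?_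
  rw [← Finset.mul_sum,
    ← lintegral_finsetSum' _ fun k _ ↦ aemeasurable_iteratedDeriv_halfDiag hf k n]
  congr 1
  refine lintegral_congr fun x ↦ ?_
  simp only [Finset.sum_range_succ, Finset.sum_range_zero, quarterTurn_zero, quarterTurn_one,
    quarterTurn_two, quarterTurn_three, enorm_eq_nnnorm]
  ring

theorem diagSum_eq_setLIntegral {f : ℂ → ℂ} (hf : DifferentiableOn ℂ f SquareD) :
    diagSum f =
      ∫⁻ w in SquareD, (∑ k ∈ Finset.range 4, halfDiagWeight k w) * ‖f w‖ₑ ^ 2 := by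
  have measurable_f : AEMeasurable f (volume.restrict SquareD) :=
    hf.continuousOn.aemeasurable isOpen_SquareD.measurableSet
  simp_rw [Finset.sum_mul]
  have measurable_term (k : ℕ) :
      AEMeasurable (fun w ↦ halfDiagWeight k w * ‖f w‖ₑ ^ 2) (volume.restrict SquareD) :=
    (measurable_halfDiagWeight k).aemeasurable.mul (measurable_f.enorm.pow_const 2)
  rw [lintegral_finsetSum' _ fun k _ ↦ measurable_term k, diagSum_eq_sum_halfDiag hf]
  exact Finset.sum_congr rfl fun k _ ↦ tsum_iteratedDeriv_halfDiag_eq hf k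

theorem bergman_norm_equiv_diagSum_general {f : ℂ → ℂ} (hf : DifferentiableOn ℂ f SquareD) :
    ENNReal.ofReal (1 / 6) * ∫⁻ z in SquareD, (‖f z‖₊ : ℝ≥0∞) ^ 2 ≤ diagSum f ∧
      diagSum f ≤ ENNReal.ofReal 4 * ∫⁻ z in SquareD, (‖f z‖₊ : ℝ≥0∞) ^ 2 := by
  rw [diagSum_eq_setLIntegral hf, ← lintegral_const_mul' _ _ ENNReal.ofReal_ne_top,
    ← lintegral_const_mul' _ _ ENNReal.ofReal_ne_top]
  exact ⟨setLIntegral_mono' isOpen_SquareD.measurableSet fun w hw ↦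
      mul_le_mul_left (le_sum_halfDiagWeight hw) _,
    lintegral_mono fun w ↦ mul_le_mul_left (sum_halfDiagWeight_le w) _⟩

/-- For functions in the Bergman space of the square `D`, the squared Bergman norm is
comparable to the two-diagonal (AHS)-type sum. -/
theorem bergman_norm_equiv_diagSum :
    ∃ c C : ℝ, 0 < c ∧ 0 < C ∧
      ∀ f : ℂ → ℂ, DifferentiableOn ℂ f SquareD →
        (∫⁻ z in SquareD, (‖f z‖₊ : ℝ≥0∞) ^ 2 ∂volume) < ⊤ →
        ENNReal.ofReal c * ∫⁻ z in SquareD, (‖f z‖₊ : ℝ≥0∞) ^ 2 ∂volume ≤ diagSum f ∧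
          diagSum f ≤ ENNReal.ofReal C * ∫⁻ z in SquareD, (‖f z‖₊ : ℝ≥0∞) ^ 2 ∂volume := by
  exact ⟨1 / 6, 4, by norm_num, by norm_num, fun f hf _ ↦ bergman_norm_equiv_diagSum_general hf⟩
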